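/- Suppose q₁ : ℝⁿ → (1,∞) satisfies the log-Hölder conditions |q₁(x)-q₁(y)| ≤ C/(-ln|x-y|) for |x-y| ≤ 1/2 and |q₁(x)-q₁(y)| ≤ C/ln(e+|x|) for |y| ≥ |x|, with 1 < (q₁)_- ≤ (q₁)_+ < ∞. Let 0 < β < n/(q₁)_+ and define q₂ by 1/q₁(x) - 1/q₂(x) = β/n. Then for the balls B_k = B(0,2^k), ‖χ_{B_k}‖_{L^{q₂(·)}} ≤ C 2^{-kβ} ‖χ_{B_k}‖_{L^{q₁(·)}} for all k ∈ ℤ. -/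

import Mathlib

/-!
A log-Hölder exponent `q` is almost constant on a ball `B_r` about the origin, so that
`‖χ_{B_r}‖_{q(·)} ≈ r ^ (n / q(z))` for a point `z` depending only on `r`: the origin if `r` is
small, any point of the sphere of radius `r` otherwise. Indeed the modular of `χ_{B_r}` at height
`r ^ (n / q(z))` is of order one: for small `r` by local log-Hölder continuity, for large `r`
because the decay condition controls the oscillation of `q` where `|x| > r ^ (1 / T)`, while for
`T = q₊ / q₋` the remaining ball has volume `≈ r ^ (n / T)`, too small to matter.
Since `1/q₁ - 1/q₂` is constant, the reciprocals of both exponents oscillate equally and the same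
`z` serves both, whence `r ^ (n / q₂(z)) = r ^ (-β) * r ^ (n / q₁(z))`.
-/

open MeasureTheory Metric
open scoped ENNReal

/-- The Luxemburg norm of `f` in the variable exponent Lebesgue space `L^{q(·)}(ℝⁿ)`. -/
noncomputable def vLpNorm {n : ℕ} (q : EuclideanSpace ℝ (Fin n) → ℝ)
    (f : EuclideanSpace ℝ (Fin n) → ℝ) : ℝ≥0∞ :=
  sInf {η : ℝ≥0∞ | η ≠ 0 ∧ ∫⁻ x, ((‖f x‖₊ : ℝ≥0∞) / η) ^ (q x) ≤ 1}

/-- The log-Hölder conditions (C1) and (C2) for a variable exponent. -/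
def LogHolder {n : ℕ} (q : EuclideanSpace ℝ (Fin n) → ℝ) : Prop :=
  ∃ C > 0,
    (∀ x y : EuclideanSpace ℝ (Fin n), dist x y ≤ 1/2 →
      |q x - q y| ≤ C / (-Real.log (dist x y))) ∧
    (∀ x y : EuclideanSpace ℝ (Fin n), ‖x‖ ≤ ‖y‖ →
      |q x - q y| ≤ C / Real.log (Real.exp 1 + ‖x‖))

section Luxemburg

variable {n : ℕ} {q f : EuclideanSpace ℝ (Fin n) → ℝ} {m : ℝ} {η : ℝ≥0∞}

theorem vLpNorm_le_of_lintegral_le (hm : 0 < m) (hq : ∀ x, m ≤ q x) {A : ℝ≥0∞} (hA : 1 ≤ A)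
    (hη : η ≠ 0) (h : ∫⁻ x, ((‖f x‖₊ : ℝ≥0∞) / η) ^ q x ≤ A) :
    vLpNorm q f ≤ A ^ m⁻¹ * η := by
  have hA₀ : A ≠ 0 := (one_pos.trans_le hA).ne'
  obtain rfl | hA_top := eq_or_ne A ⊤
  · rw [ENNReal.top_rpow_of_pos (inv_pos.2 hm), ENNReal.top_mul hη]
    exact le_top
  have hη' : A ^ m⁻¹ * η ≠ 0 :=
    mul_ne_zero (ENNReal.rpow_pos_of_nonneg (pos_iff_ne_zero.2 hA₀) (by positivity)).ne' hη
  refine sInf_le ⟨hη', ?_⟩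
  have pointwise (x) : ((‖f x‖₊ : ℝ≥0∞) / (A ^ m⁻¹ * η)) ^ q x ≤
      A⁻¹ * ((‖f x‖₊ : ℝ≥0∞) / η) ^ q x := by
    have hqx : 0 ≤ q x := hm.le.trans (hq x)
    have hAx : (A ^ m⁻¹)⁻¹ ^ q x ≤ A⁻¹ := by
      rw [ENNReal.inv_rpow, ← ENNReal.rpow_mul, ENNReal.inv_le_inv]
      refine ENNReal.le_rpow_self_of_one_le hA ?_
      rw [inv_mul_eq_div, one_le_div hm]
      exact hq x
    rw [div_eq_mul_inv, div_eq_mul_inv, ENNReal.mul_inv (by simp [hA₀, hA_top]) (.inr hη),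
      mul_left_comm, ENNReal.mul_rpow_of_nonneg _ _ hqx]
    gcongr
  calc ∫⁻ x, ((‖f x‖₊ : ℝ≥0∞) / (A ^ m⁻¹ * η)) ^ q x
      ≤ ∫⁻ x, A⁻¹ * ((‖f x‖₊ : ℝ≥0∞) / η) ^ q x := lintegral_mono pointwise
    _ = A⁻¹ * ∫⁻ x, ((‖f x‖₊ : ℝ≥0∞) / η) ^ q x :=
        lintegral_const_mul' _ _ (ENNReal.inv_ne_top.2 hA₀)
    _ ≤ A⁻¹ * A := by gcongr
    _ = 1 := ENNReal.inv_mul_cancel hA₀ hA_top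

theorem le_vLpNorm_of_lt_lintegral (hm : 0 < m) (hq : ∀ x, m ≤ q x) {c : ℝ≥0∞} (hc : c ≤ 1)
    (h : c < ∫⁻ x, ((‖f x‖₊ : ℝ≥0∞) / η) ^ q x) :
    c ^ m⁻¹ * η ≤ vLpNorm q f := by
  refine le_sInf ?_
  rintro η' ⟨hη'₀, hη'⟩
  contrapose! h
  have pointwise (x) : ((‖f x‖₊ : ℝ≥0∞) / η) ^ q x ≤ c * ((‖f x‖₊ : ℝ≥0∞) / η') ^ q x := by
    have hqx : 0 ≤ q x := hm.le.trans (hq x)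
    have hη_inv : η⁻¹ ≤ c ^ m⁻¹ * η'⁻¹ := by
      rw [← div_eq_mul_inv, ENNReal.le_div_iff_mul_le (.inl hη'₀) (.inl h.ne_top), mul_comm]
      exact ENNReal.div_le_of_le_mul h.le
    have hcx : (c ^ m⁻¹) ^ q x ≤ c := by
      rw [← ENNReal.rpow_mul]
      refine ENNReal.rpow_le_self_of_le_one hc ?_
      rw [inv_mul_eq_div, one_le_div hm]
      exact hq x
    calc ((‖f x‖₊ : ℝ≥0∞) / η) ^ q x
        ≤ (c ^ m⁻¹ * (‖f x‖₊ / η')) ^ q x := by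
          rw [ENNReal.div_eq_inv_mul, ENNReal.div_eq_inv_mul, ← mul_assoc]
          gcongr
      _ = (c ^ m⁻¹) ^ q x * ((‖f x‖₊ : ℝ≥0∞) / η') ^ q x :=
          ENNReal.mul_rpow_of_nonneg _ _ hqx
      _ ≤ c * ((‖f x‖₊ : ℝ≥0∞) / η') ^ q x := by gcongr
  calc ∫⁻ x, ((‖f x‖₊ : ℝ≥0∞) / η) ^ q x
      ≤ ∫⁻ x, c * ((‖f x‖₊ : ℝ≥0∞) / η') ^ q x := lintegral_mono pointwise
    _ = c * ∫⁻ x, ((‖f x‖₊ : ℝ≥0∞) / η') ^ q x :=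
        lintegral_const_mul' _ _ (ne_top_of_le_ne_top ENNReal.one_ne_top hc)
    _ ≤ c := mul_le_of_le_one_right' hη'

theorem lintegral_indicator_one_div_rpow (hq : ∀ x, 0 < q x) {y : ℝ} (hy : 0 < y)
    {S : Set (EuclideanSpace ℝ (Fin n))} (hS : MeasurableSet S) :
    ∫⁻ x, ((‖S.indicator (fun _ => (1 : ℝ)) x‖₊ : ℝ≥0∞) / ENNReal.ofReal y) ^ q x =
      ∫⁻ x in S, ENNReal.ofReal (y ^ (-q x)) := by
  rw [← lintegral_indicator hS]
  refine lintegral_congr fun x => ?_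
  by_cases hx : x ∈ S
  · simp only [Set.indicator_of_mem hx, nnnorm_one, ENNReal.coe_one, one_div]
    rw [ENNReal.inv_rpow, ← ENNReal.rpow_neg, ENNReal.ofReal_rpow_of_pos hy]
  · simp [Set.indicator_of_notMem hx, hq x]

end Luxemburg

section Haar

open Module

variable {E : Type*} [NormedAddCommGroup E] [NormedSpace ℝ E] [MeasurableSpace E] [BorelSpace E]
  [FiniteDimensional ℝ E] {μ : Measure E} [μ.IsAddHaarMeasure] {S : Set E} {f : E → ℝ≥0∞}
  {a r : ℝ}

theorem setLIntegral_le_of_subset_closedBall (hr : 0 < r) (ha : 0 ≤ a) (hS : MeasurableSet S)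
    (hSr : S ⊆ closedBall 0 r) (hf : ∀ x ∈ S, f x ≤ ENNReal.ofReal (a * (r ^ finrank ℝ E)⁻¹)) :
    ∫⁻ x in S, f x ∂μ ≤ ENNReal.ofReal a * μ (closedBall 0 1) :=
  calc ∫⁻ x in S, f x ∂μ
      ≤ ∫⁻ _ in S, ENNReal.ofReal (a * (r ^ finrank ℝ E)⁻¹) ∂μ := setLIntegral_mono' hS hf
    _ = ENNReal.ofReal (a * (r ^ finrank ℝ E)⁻¹) * μ S := setLIntegral_const _ _
    _ ≤ ENNReal.ofReal (a * (r ^ finrank ℝ E)⁻¹) * μ (closedBall 0 r) := by gcongr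
    _ = ENNReal.ofReal a * μ (closedBall 0 1) := by
        rw [Measure.addHaar_closedBall' μ 0 hr.le, ← mul_assoc,
          ← ENNReal.ofReal_mul (by positivity)]
        congr 2
        field_simp

theorem setLIntegral_closedBall_le_add {b ρ : ℝ} (hr : 0 < r) (hρ : 0 < ρ) (ha : 0 ≤ a)
    (hb : 0 ≤ b)
    (houter : ∀ x ∈ closedBall 0 r \ closedBall 0 ρ,
      f x ≤ ENNReal.ofReal (a * (r ^ finrank ℝ E)⁻¹))
    (hinner : ∀ x ∈ closedBall 0 ρ, f x ≤ ENNReal.ofReal (b * (ρ ^ finrank ℝ E)⁻¹)) :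
    ∫⁻ x in closedBall 0 r, f x ∂μ ≤ ENNReal.ofReal (a + b) * μ (closedBall 0 1) :=
  calc ∫⁻ x in closedBall 0 r, f x ∂μ
      ≤ ∫⁻ x in (closedBall 0 r \ closedBall 0 ρ) ∪ closedBall 0 ρ, f x ∂μ :=
        lintegral_mono_set (by simp)
    _ ≤ (∫⁻ x in closedBall 0 r \ closedBall 0 ρ, f x ∂μ) + ∫⁻ x in closedBall 0 ρ, f x ∂μ :=
        lintegral_union_le _ _ _
    _ ≤ ENNReal.ofReal a * μ (closedBall 0 1) + ENNReal.ofReal b * μ (closedBall 0 1) := by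
        gcongr
        · exact setLIntegral_le_of_subset_closedBall hr ha
            (measurableSet_closedBall.diff measurableSet_closedBall) Set.sdiff_subset houter
        · exact setLIntegral_le_of_subset_closedBall hρ hb measurableSet_closedBall subset_rfl
            hinner
    _ = ENNReal.ofReal (a + b) * μ (closedBall 0 1) := by
        rw [ENNReal.ofReal_add ha hb, add_mul]

theorem half_measure_closedBall_le_measure_annulus [Nontrivial E] (hr : 0 ≤ r) :
    ENNReal.ofReal (r ^ finrank ℝ E / 2) * μ (closedBall 0 1) ≤
      μ (closedBall 0 r \ closedBall 0 (r / 2)) := by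
  have half_pow : (r / 2) ^ finrank ℝ E ≤ r ^ finrank ℝ E / 2 := by
    rw [div_pow]
    gcongr
    exact le_self_pow₀ one_le_two finrank_pos.ne'
  refine le_trans ?_ le_measure_sdiff
  rw [Measure.addHaar_closedBall' μ 0 hr,
    Measure.addHaar_closedBall' μ 0 (by positivity : 0 ≤ r / 2),
    ← ENNReal.sub_mul fun _ _ => measure_closedBall_lt_top.ne,
    ← ENNReal.ofReal_sub _ (by positivity)]
  gcongr
  linarith

theorem le_setLIntegral_closedBall_of_le_on_annulus [Nontrivial E] (hr : 0 < r) (ha : 0 ≤ a)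
    (hf : ∀ x ∈ closedBall 0 r \ closedBall 0 (r / 2),
      ENNReal.ofReal (a * (r ^ finrank ℝ E)⁻¹) ≤ f x) :
    ENNReal.ofReal (a / 2) * μ (closedBall 0 1) ≤ ∫⁻ x in closedBall 0 r, f x ∂μ :=
  calc ENNReal.ofReal (a / 2) * μ (closedBall 0 1)
      = ENNReal.ofReal (a * (r ^ finrank ℝ E)⁻¹) *
          (ENNReal.ofReal (r ^ finrank ℝ E / 2) * μ (closedBall 0 1)) := by
        rw [← mul_assoc, ← ENNReal.ofReal_mul (by positivity)]
        congr 2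
        field_simp
    _ ≤ ENNReal.ofReal (a * (r ^ finrank ℝ E)⁻¹) * μ (closedBall 0 r \ closedBall 0 (r / 2)) := by
        gcongr
        exact half_measure_closedBall_le_measure_annulus hr.le
    _ = ∫⁻ _ in closedBall 0 r \ closedBall 0 (r / 2),
          ENNReal.ofReal (a * (r ^ finrank ℝ E)⁻¹) ∂μ := (setLIntegral_const _ _).symm
    _ ≤ ∫⁻ x in closedBall 0 r \ closedBall 0 (r / 2), f x ∂μ :=
        setLIntegral_mono' (measurableSet_closedBall.diff measurableSet_closedBall) hf
    _ ≤ ∫⁻ x in closedBall 0 r, f x ∂μ := lintegral_mono_set Set.sdiff_subset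

end Haar

/-- `z` represents the function `g` on the ball of radius `r` about the origin, up to the
oscillation that log-Hölder continuity allows, with constant `M`. This is meant for the reciprocal
`g = 1 / q` of a variable exponent: `r ^ (n / q z)` is then comparable to the norm of the indicator
of the ball. For `r ≥ 1` the weight is `log (e + ‖x‖)` instead of `log r`, since decay at infinity
says nothing about points `x` near the origin. -/
structure IsReferencePoint {E : Type*} [NormedAddCommGroup E] (g : E → ℝ) (M r : ℝ) (z : E) :
    Prop where
  of_le_one : r ≤ 1 → ∀ x, ‖x‖ ≤ r → |g x - g z| * |Real.log r| ≤ M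
  of_one_le : 1 ≤ r → ∀ x, ‖x‖ ≤ r → |g x - g z| * Real.log (Real.exp 1 + ‖x‖) ≤ M

theorem one_le_log_exp_one_add {t : ℝ} (ht : 0 ≤ t) : 1 ≤ Real.log (Real.exp 1 + t) := by
  rw [Real.le_log_iff_exp_le (by positivity)]
  linarith

namespace IsReferencePoint

variable {E : Type*} [NormedAddCommGroup E] {g g' : E → ℝ} {M r : ℝ} {z : E}

theorem congr_sub_const (h : IsReferencePoint g M r z) {a : ℝ} (hg : ∀ x, g x - g' x = a) :
    IsReferencePoint g' M r z := by
  have hsub (x) : g' x - g' z = g x - g z := by linarith [hg x, hg z]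
  exact ⟨by simpa only [hsub] using h.of_le_one, by simpa only [hsub] using h.of_one_le⟩

theorem abs_sub_mul_abs_log_le (h : IsReferencePoint g M r z) {T : ℝ} (hT : 1 ≤ T) {x : E}
    (hx : ‖x‖ ≤ r) (hxT : 1 ≤ r → r ^ (1 / T) ≤ Real.exp 1 + ‖x‖) :
    |g x - g z| * |Real.log r| ≤ T * M := by
  obtain hr | hr := le_total r 1
  · have hM := h.of_le_one hr x hx
    exact hM.trans (le_mul_of_one_le_left ((by positivity : (0 : ℝ) ≤ _).trans hM) hT)
  · have hlog : Real.log r ≤ T * Real.log (Real.exp 1 + ‖x‖) := by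
      have := Real.log_le_log (by positivity) (hxT hr)
      rwa [Real.log_rpow (by positivity), one_div, inv_mul_le_iff₀ (by positivity)] at this
    rw [abs_of_nonneg (Real.log_nonneg hr)]
    calc |g x - g z| * Real.log r
        ≤ |g x - g z| * (T * Real.log (Real.exp 1 + ‖x‖)) := by gcongr
      _ = T * (|g x - g z| * Real.log (Real.exp 1 + ‖x‖)) := by ring
      _ ≤ T * M := by gcongr; exact h.of_one_le hr x hx

end IsReferencePoint

theorem abs_one_div_sub_one_div_le {m a b : ℝ} (hm : 0 < m) (ha : m ≤ a) (hb : m ≤ b) :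
    |1 / a - 1 / b| ≤ |a - b| / m ^ 2 := by
  have ha₀ : 0 < a := hm.trans_le ha
  have hb₀ : 0 < b := hm.trans_le hb
  rw [div_sub_div _ _ ha₀.ne' hb₀.ne', one_mul, mul_one, abs_div, abs_of_pos (mul_pos ha₀ hb₀),
    abs_sub_comm b a, sq]
  gcongr

namespace LogHolder

variable {n : ℕ} {q g : EuclideanSpace ℝ (Fin n) → ℝ}

theorem one_div {m : ℝ} (hm : 0 < m) (hq : ∀ x, m ≤ q x) (h : LogHolder q) :
    LogHolder fun x => 1 / q x := by
  obtain ⟨C, hC, hlocal, hdecay⟩ := h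
  have transfer {x y : EuclideanSpace ℝ (Fin n)} {L : ℝ} (hL : |q x - q y| ≤ C / L) :
      |1 / q x - 1 / q y| ≤ C / m ^ 2 / L := by
    rw [div_right_comm]
    exact (abs_one_div_sub_one_div_le hm (hq x) (hq y)).trans (by gcongr)
  exact ⟨C / m ^ 2, by positivity, fun x y hxy => transfer (hlocal x y hxy),
    fun x y hxy => transfer (hdecay x y hxy)⟩

theorem exists_isReferencePoint [NeZero n] (h : LogHolder g) :
    ∃ M, ∀ r > 0, ∃ z, IsReferencePoint g M r z := by
  obtain ⟨C, hC, hlocal, hdecay⟩ := h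
  refine ⟨C, fun r hr => ?_⟩
  obtain hr_half | hr_half := le_total r (1 / 2)
  · refine ⟨0, fun _ x hx => ?_, fun hr_one => by linarith⟩
    obtain rfl | hx₀ := eq_or_ne x 0
    · simpa using hC.le
    have hlog : Real.log ‖x‖ ≤ Real.log r := Real.log_le_log (norm_pos_iff.2 hx₀) hx
    have hlog_neg : Real.log r < 0 := Real.log_neg hr (by linarith)
    have hosc := hlocal x 0 (by simpa using hx.trans hr_half)
    rw [dist_zero_right, le_div_iff₀ (by linarith)] at hosc
    rw [abs_of_neg hlog_neg]
    exact le_trans (by gcongr) hosc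
  · obtain ⟨z, hz⟩ := exists_norm_eq (EuclideanSpace ℝ (Fin n)) hr.le
    have hosc (x) (hx : ‖x‖ ≤ r) : |g x - g z| * Real.log (Real.exp 1 + ‖x‖) ≤ C := by
      rw [← le_div_iff₀ (one_pos.trans_le (one_le_log_exp_one_add (norm_nonneg x)))]
      exact hdecay x z (hx.trans hz.ge)
    refine ⟨z, fun hr_one x hx => le_trans ?_ (hosc x hx), fun _ => hosc⟩
    gcongr
    have hlog_half : Real.log 2⁻¹ ≤ Real.log r := Real.log_le_log (by norm_num) (by linarith)
    rw [Real.log_inv] at hlog_half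
    rw [abs_of_nonpos (Real.log_nonpos hr.le hr_one)]
    linarith [Real.log_two_lt_d9, one_le_log_exp_one_add (norm_nonneg x)]

end LogHolder

section PowerOfRadius

variable {n : ℕ} {m Q q t r M : ℝ}

theorem rpow_div_rpow_neg_eq (hr : 0 < r) (hq : q ≠ 0) :
    (r ^ (n / t)) ^ (-q) = Real.exp (n * q * ((1 / q - 1 / t) * Real.log r)) * (r ^ n)⁻¹ := by
  rw [← Real.rpow_mul hr.le, ← Real.rpow_natCast, ← Real.rpow_neg hr.le,
    Real.rpow_def_of_pos hr, Real.rpow_def_of_pos hr, ← Real.exp_add]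
  congr 1
  field_simp
  ring

theorem rpow_div_rpow_neg_mem_Icc (hr : 0 < r) (hq : 0 < q) (hqQ : q ≤ Q)
    (h : |1 / q - 1 / t| * |Real.log r| ≤ M) :
    (r ^ (n / t)) ^ (-q) ∈
      Set.Icc (Real.exp (-(n * Q * M)) * (r ^ n)⁻¹) (Real.exp (n * Q * M) * (r ^ n)⁻¹) := by
  have hexp : |n * q * ((1 / q - 1 / t) * Real.log r)| ≤ n * Q * M := by
    rw [abs_mul, abs_mul (1 / q - 1 / t), abs_of_nonneg (by positivity)]
    have hQ : 0 ≤ Q := hq.le.trans hqQ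
    gcongr
  rw [rpow_div_rpow_neg_eq hr hq.ne']
  constructor
  · gcongr
    exact (abs_le.1 hexp).1
  · exact mul_le_mul_of_nonneg_right (Real.exp_le_exp.2 (abs_le.1 hexp).2) (by positivity)

theorem rpow_div_rpow_neg_le_of_one_le (hr : 1 ≤ r) (hm : 0 ≤ m) (hmq : m ≤ q) (ht : 0 < t)
    (htQ : t ≤ Q) : (r ^ (n / t)) ^ (-q) ≤ ((r ^ (1 / (Q / m))) ^ n)⁻¹ := by
  have hr₀ : 0 ≤ r := by positivity
  have hq : 0 ≤ q := hm.trans hmq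
  rw [← Real.rpow_natCast, ← Real.rpow_mul hr₀, ← Real.rpow_mul hr₀, ← Real.rpow_neg hr₀]
  refine Real.rpow_le_rpow_of_exponent_le hr ?_
  calc n / t * -q = -(q / t * n) := by ring
    _ ≤ -(m / Q * n) := by gcongr
    _ = -(1 / (Q / m) * n) := by rw [one_div_div]

theorem rpow_half_le_exp_one_add_of_half_le {s : ℝ} (hr : 0 ≤ r) (hs : r / 2 ≤ s) :
    r ^ (1 / 2 : ℝ) ≤ Real.exp 1 + s := by
  rw [← Real.sqrt_eq_rpow]
  nlinarith [Real.sq_sqrt hr, sq_nonneg (√r - 1), Real.add_one_le_exp 1]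

end PowerOfRadius

section BallNorm

variable {n : ℕ} {q : EuclideanSpace ℝ (Fin n) → ℝ} {m Q M r : ℝ} {z : EuclideanSpace ℝ (Fin n)}

theorem IsReferencePoint.setLIntegral_closedBall_rpow_le
    (hz : IsReferencePoint (fun x => 1 / q x) M r z)
    (hm : 0 < m) (hq : ∀ x, m ≤ q x ∧ q x ≤ Q) (hr : 0 < r) :
    ∫⁻ x in closedBall 0 r, ENNReal.ofReal ((r ^ (n / q z)) ^ (-q x)) ≤
      ENNReal.ofReal (Real.exp (n * Q * (Q / m * M)) + 1) *
        volume (closedBall (0 : EuclideanSpace ℝ (Fin n)) 1) := by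
  have hqpos (x) : 0 < q x := hm.trans_le (hq x).1
  have hT : 1 ≤ Q / m := (one_le_div hm).2 ((hq z).1.trans (hq z).2)
  have off_core (x) (hx : ‖x‖ ≤ r) (hxT : 1 ≤ r → r ^ (1 / (Q / m)) ≤ Real.exp 1 + ‖x‖) :
      ENNReal.ofReal ((r ^ (n / q z)) ^ (-q x)) ≤
        ENNReal.ofReal (Real.exp (n * Q * (Q / m * M)) * (r ^ n)⁻¹) :=
    ENNReal.ofReal_le_ofReal (rpow_div_rpow_neg_mem_Icc hr (hqpos x) (hq x).2
      (hz.abs_sub_mul_abs_log_le hT hx hxT)).2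
  obtain hr_one | hr_one := lt_or_ge r 1
  · refine (setLIntegral_le_of_subset_closedBall hr (Real.exp_nonneg _) measurableSet_closedBall
      subset_rfl fun x hx => ?_).trans
      (by gcongr; exact le_add_of_nonneg_right zero_le_one)
    rw [finrank_euclideanSpace_fin]
    exact off_core x (by simpa using hx) fun h => absurd h hr_one.not_ge
  refine setLIntegral_closedBall_le_add (ρ := r ^ (1 / (Q / m))) hr (by positivity)
    (Real.exp_nonneg _) zero_le_one (fun x hx => ?_) fun x _ => ENNReal.ofReal_le_ofReal ?_
  · rw [finrank_euclideanSpace_fin]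
    have hx_core : r ^ (1 / (Q / m)) < ‖x‖ := by simpa using hx.2
    exact off_core x (by simpa using hx.1) fun _ =>
      hx_core.le.trans (le_add_of_nonneg_left (Real.exp_nonneg 1))
  · rw [finrank_euclideanSpace_fin, one_mul]
    exact rpow_div_rpow_neg_le_of_one_le hr_one hm.le (hq x).1 (hqpos z) (hq z).2

theorem exists_vLpNorm_closedBall_le (hm : 0 < m) (hq : ∀ x, m ≤ q x ∧ q x ≤ Q) (M : ℝ) :
    ∃ K > 0, ∀ r > 0, ∀ z, IsReferencePoint (fun x => 1 / q x) M r z →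
      vLpNorm q ((closedBall 0 r).indicator fun _ => (1 : ℝ)) ≤
        ENNReal.ofReal (K * r ^ (n / q z)) := by
  set A := 1 + ENNReal.ofReal (Real.exp (n * Q * (Q / m * M)) + 1) *
    volume (closedBall (0 : EuclideanSpace ℝ (Fin n)) 1) with hA
  have hA_top : A ^ m⁻¹ ≠ ⊤ := by
    refine ENNReal.rpow_ne_top_of_nonneg (by positivity) ?_
    simp [hA, ENNReal.mul_eq_top, measure_closedBall_lt_top.ne]
  have hA_pos : A ^ m⁻¹ ≠ 0 :=
    (ENNReal.rpow_pos_of_nonneg (by simp [hA]) (by positivity)).ne'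
  refine ⟨(A ^ m⁻¹).toReal, ENNReal.toReal_pos hA_pos hA_top, fun r hr z hz => ?_⟩
  have hη : 0 < r ^ (n / q z) := by positivity
  rw [ENNReal.ofReal_mul ENNReal.toReal_nonneg, ENNReal.ofReal_toReal hA_top]
  refine vLpNorm_le_of_lintegral_le hm (fun x => (hq x).1) le_self_add (by simpa using hη) ?_
  rw [lintegral_indicator_one_div_rpow (fun x => hm.trans_le (hq x).1) hη measurableSet_closedBall]
  exact (hz.setLIntegral_closedBall_rpow_le hm hq hr).trans le_add_self

theorem IsReferencePoint.le_setLIntegral_closedBall_rpow [NeZero n]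
    (hz : IsReferencePoint (fun x => 1 / q x) M r z) (hq : ∀ x, 0 < q x ∧ q x ≤ Q) (hr : 0 < r) :
    ENNReal.ofReal (Real.exp (-(n * Q * (2 * M))) / 2) *
        volume (closedBall (0 : EuclideanSpace ℝ (Fin n)) 1) ≤
      ∫⁻ x in closedBall 0 r, ENNReal.ofReal ((r ^ (n / q z)) ^ (-q x)) := by
  refine le_setLIntegral_closedBall_of_le_on_annulus hr (Real.exp_nonneg _) fun x hx => ?_
  have hx_le : ‖x‖ ≤ r := by simpa using hx.1
  have hx_ge : r / 2 < ‖x‖ := by simpa using hx.2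
  rw [finrank_euclideanSpace_fin]
  exact ENNReal.ofReal_le_ofReal (rpow_div_rpow_neg_mem_Icc hr (hq x).1 (hq x).2
    (hz.abs_sub_mul_abs_log_le one_le_two hx_le
      fun _ => rpow_half_le_exp_one_add_of_half_le hr.le hx_ge.le)).1

theorem exists_le_vLpNorm_closedBall [NeZero n] (hm : 0 < m) (hq : ∀ x, m ≤ q x ∧ q x ≤ Q)
    (M : ℝ) :
    ∃ κ > 0, ∀ r > 0, ∀ z, IsReferencePoint (fun x => 1 / q x) M r z →
      ENNReal.ofReal (κ * r ^ (n / q z)) ≤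
        vLpNorm q ((closedBall 0 r).indicator fun _ => (1 : ℝ)) := by
  have hqpos (x) : 0 < q x := hm.trans_le (hq x).1
  let a := ENNReal.ofReal (Real.exp (-(n * Q * (2 * M))) / 2) *
    volume (closedBall (0 : EuclideanSpace ℝ (Fin n)) 1)
  have ha : 0 < a := ENNReal.mul_pos (by simpa using Real.exp_pos _)
    (measure_closedBall_pos volume _ one_pos).ne'
  obtain ⟨c, hc₀, hc⟩ := exists_between (lt_min one_pos ha)
  have hc_one : c ≤ 1 := hc.le.trans (min_le_left _ _)
  have hc_top : c ^ m⁻¹ ≠ ⊤ :=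
    ENNReal.rpow_ne_top_of_nonneg (by positivity) (ne_top_of_le_ne_top ENNReal.one_ne_top hc_one)
  have hc_pos : c ^ m⁻¹ ≠ 0 := (ENNReal.rpow_pos_of_nonneg hc₀ (by positivity)).ne'
  refine ⟨(c ^ m⁻¹).toReal, ENNReal.toReal_pos hc_pos hc_top, fun r hr z hz => ?_⟩
  rw [ENNReal.ofReal_mul ENNReal.toReal_nonneg, ENNReal.ofReal_toReal hc_top]
  refine le_vLpNorm_of_lt_lintegral hm (fun x => (hq x).1) hc_one ?_
  rw [lintegral_indicator_one_div_rpow hqpos (by positivity) measurableSet_closedBall]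
  exact hc.trans_le ((min_le_right _ _).trans
    (hz.le_setLIntegral_closedBall_rpow (fun x => ⟨hqpos x, (hq x).2⟩) hr))

end BallNorm

theorem exists_bounds_of_one_div_sub_eq {X : Type*} {q₁ q₂ : X → ℝ} {m Q α : ℝ} (hm : 0 < m)
    (hq₁ : ∀ x, m ≤ q₁ x ∧ q₁ x ≤ Q) (hα : α < 1 / Q) (h : ∀ x, 1 / q₁ x - 1 / q₂ x = α) :
    ∃ m' > 0, ∃ Q', ∀ x, m' ≤ q₂ x ∧ q₂ x ≤ Q' := by
  obtain hX | ⟨⟨x₀⟩⟩ := isEmpty_or_nonempty X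
  · exact ⟨1, one_pos, 1, fun x => hX.elim x⟩
  have hrecip (x) : 1 / Q - α ≤ 1 / q₂ x ∧ 1 / q₂ x ≤ 1 / m - α := by
    have h_le := one_div_le_one_div_of_le (hm.trans_le (hq₁ x).1) (hq₁ x).2
    have h_ge := one_div_le_one_div_of_le hm (hq₁ x).1
    constructor <;> linarith [h x]
  have hQα : 0 < 1 / Q - α := sub_pos.2 hα
  have hmα : 0 < 1 / m - α := hQα.trans_le ((hrecip x₀).1.trans (hrecip x₀).2)
  have hq₂ (x) : 0 < q₂ x := one_div_pos.1 (hQα.trans_le (hrecip x).1)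
  exact ⟨1 / (1 / m - α), one_div_pos.2 hmα, 1 / (1 / Q - α), fun x =>
    ⟨(one_div_le hmα (hq₂ x)).2 (hrecip x).2, (le_one_div (hq₂ x) hQα).2 (hrecip x).1⟩⟩

theorem stmt13_general {n : ℕ} (hn : 0 < n) {q₁ q₂ : EuclideanSpace ℝ (Fin n) → ℝ}
    (hlh : LogHolder q₁) {Qm Qp : ℝ} (hQm : 0 < Qm) (hbounds : ∀ x, Qm ≤ q₁ x ∧ q₁ x ≤ Qp)
    {β : ℝ} (hβ : β < n / Qp) (hq₂ : ∀ x, 1 / q₁ x - 1 / q₂ x = β / n) :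
    ∃ C > 0, ∀ r > 0,
      vLpNorm q₂ ((closedBall 0 r).indicator fun _ => (1 : ℝ)) ≤
        ENNReal.ofReal (C * r ^ (-β)) *
          vLpNorm q₁ ((closedBall 0 r).indicator fun _ => (1 : ℝ)) := by
  have : NeZero n := ⟨hn.ne'⟩
  have hn' : (0 : ℝ) < n := Nat.cast_pos.2 hn
  have hα : β / n < 1 / Qp := by rwa [div_lt_iff₀ hn', one_div_mul_eq_div]
  obtain ⟨m', hm', Q', hq₂_bounds⟩ := exists_bounds_of_one_div_sub_eq hQm hbounds hα hq₂
  obtain ⟨M, hM⟩ := (hlh.one_div hQm fun x => (hbounds x).1).exists_isReferencePoint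
  obtain ⟨K, hK, upper⟩ := exists_vLpNorm_closedBall_le hm' hq₂_bounds M
  obtain ⟨κ, hκ, lower⟩ := exists_le_vLpNorm_closedBall hQm hbounds M
  refine ⟨K / κ, by positivity, fun r hr => ?_⟩
  obtain ⟨z, hz⟩ := hM r hr
  have hexp : n / q₂ z = -β + n / q₁ z := by
    rw [div_eq_mul_one_div, show 1 / q₂ z = 1 / q₁ z - β / n by linarith [hq₂ z]]
    field_simp
    ring
  calc vLpNorm q₂ ((closedBall 0 r).indicator fun _ => (1 : ℝ))
      ≤ ENNReal.ofReal (K * r ^ (n / q₂ z)) := upper r hr z (hz.congr_sub_const hq₂)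
    _ = ENNReal.ofReal (K / κ * r ^ (-β)) * ENNReal.ofReal (κ * r ^ (n / q₁ z)) := by
        rw [← ENNReal.ofReal_mul (by positivity), hexp, Real.rpow_add hr]
        congr 1
        field_simp
    _ ≤ ENNReal.ofReal (K / κ * r ^ (-β)) *
          vLpNorm q₁ ((closedBall 0 r).indicator fun _ => (1 : ℝ)) := by
        gcongr
        exact lower r hr z hz

/-- if `q₁ : ℝⁿ → (1,∞)` is log-Hölder with `1 < (q₁)₋ ≤ (q₁)₊ < ∞`,
`0 < β < n/(q₁)₊`, and `1/q₁ - 1/q₂ = β/n`, then for the balls `B_k = B(0, 2^k)`,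
`‖χ_{B_k}‖_{L^{q₂(·)}} ≤ C 2^{-kβ} ‖χ_{B_k}‖_{L^{q₁(·)}}` for all `k ∈ ℤ`. -/
theorem stmt13 (n : ℕ) (hn : 0 < n) (q₁ q₂ : EuclideanSpace ℝ (Fin n) → ℝ)
    (hq₁meas : Measurable q₁) (hlh : LogHolder q₁)
    (Qm Qp : ℝ) (hQm : 1 < Qm) (hbounds : ∀ x, Qm ≤ q₁ x ∧ q₁ x ≤ Qp)
    (β : ℝ) (hβ : 0 < β) (hβ' : β < n / Qp)
    (hq₂ : ∀ x, 1 / q₁ x - 1 / q₂ x = β / n) :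
    ∃ C > 0, ∀ k : ℤ,
      vLpNorm q₂ ((closedBall (0 : EuclideanSpace ℝ (Fin n)) ((2:ℝ) ^ k)).indicator
          fun _ => (1:ℝ)) ≤
        ENNReal.ofReal (C * (2:ℝ) ^ (-(k:ℝ) * β)) *
          vLpNorm q₁ ((closedBall (0 : EuclideanSpace ℝ (Fin n)) ((2:ℝ) ^ k)).indicator
            fun _ => (1:ℝ)) := by
  obtain ⟨C, hC, h⟩ := stmt13_general hn hlh (one_pos.trans hQm) hbounds hβ' hq₂
  exact ⟨C, hC, fun k => by
    simpa only [← Real.rpow_intCast, ← Real.rpow_mul zero_le_two, neg_mul, mul_neg]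
      using h (2 ^ k) (by positivity)⟩
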